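/- arXiv:1703.00352 — 4 statements merged into one kernel-verified Lean document; each statement's English description precedes it below -/
import Mathlib

section
/- Let P be a probability measure on a measurable space Ω and let A, B, C be measurable events such that ⟨A, B, C⟩ is a conjunctive fork for (A, B). Then P(A ∩ B) − P(A)·P(B) > 0. -/
open MeasureTheory Finset

/-- The probability of an event, as a real number. -/
noncomputable def pr {Ω : Type*} [MeasurableSpace Ω] (P : Measure Ω) (X : Set Ω) : ℝ :=
  (P X).toReal

/-- Conditional probability `P(X | C) = P(X ∩ C) / P(C)`, as a real number. -/
noncomputable def cpr {Ω : Type*} [MeasurableSpace Ω] (P : Measure Ω) (X C : Set Ω) : ℝ :=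
  pr P (X ∩ C) / pr P C

/-- If `⟨A, B, C⟩` is a conjunctive fork for `(A, B)`, then `A` and `B` are
positively correlated: `P(A ∩ B) - P(A)·P(B) > 0`. -/
theorem stmt_0 {Ω : Type*} [MeasurableSpace Ω] (P : Measure Ω) [IsProbabilityMeasure P]
    (A B C : Set Ω) (hA : MeasurableSet A) (hB : MeasurableSet B) (hC : MeasurableSet C)
    (hAB : A ≠ B) (hAC : A ≠ C) (hBC : B ≠ C)
    (hC0 : 0 < pr P C) (hC1 : pr P C < 1)
    (hscreenC : cpr P (A ∩ B) C = cpr P A C * cpr P B C)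
    (hscreenCc : cpr P (A ∩ B) Cᶜ = cpr P A Cᶜ * cpr P B Cᶜ)
    (hAfork : cpr P A Cᶜ < cpr P A C)
    (hBfork : cpr P B Cᶜ < cpr P B C) :
    0 < pr P (A ∩ B) - pr P A * pr P B := by
  have hc : pr P Cᶜ = 1 - pr P C := by
    unfold pr
    exact probReal_compl_eq_one_sub hC
  have hpos : 0 < pr P Cᶜ := by rw [hc]; linarith
  have tot : ∀ X : Set Ω, pr P X = cpr P X C * pr P C + cpr P X Cᶜ * pr P Cᶜ := by
    intro X
    unfold cpr
    rw [div_mul_cancel₀ _ hC0.ne', div_mul_cancel₀ _ hpos.ne']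
    have h := measureReal_inter_add_diff (μ := P) (s := X) hC
    rw [Set.diff_eq] at h
    exact h.symm
  rw [tot (A ∩ B), tot A, tot B, hscreenC, hscreenCc, hc]
  have h1 : 0 < 1 - pr P C := by linarith
  have key := mul_pos (mul_pos hC0 h1) (mul_pos (sub_pos.2 hAfork) (sub_pos.2 hBfork))
  refine key.trans_eq ?_
  ring
end

section
/- Let P be a probability measure on a measurable space Ω, let A, B be measurable events, let n ≥ 2, and let {C_1, …, C_n} be a finite measurable partition of Ω with P(C_i) > 0 for every i, satisfying the screening-off condition P(A ∩ B|C_i) = P(A|C_i)·P(B|C_i) for every i = 1, …, n. Then P(A ∩ B) − P(A)·P(B) = (1/2)·Σ_{i,j=1}^{n} P(C_i)·P(C_j)·[P(A|C_i) − P(A|C_j)]·[P(B|C_i) − P(B|C_j)]. -/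
open MeasureTheory Finset

theorem pr_total_aux {Ω : Type*} [MeasurableSpace Ω] (P : Measure Ω) [IsProbabilityMeasure P]
    (n : ℕ) (C : Fin n → Set Ω) (hCmeas : ∀ i, MeasurableSet (C i))
    (hCdisj : Pairwise fun i j => Disjoint (C i) (C j))
    (hCcover : (⋃ i, C i) = Set.univ)
    (hCpos : ∀ i, 0 < pr P (C i)) (X : Set Ω) (hX : MeasurableSet X) :
    pr P X = ∑ i, pr P (C i) * cpr P X (C i) := by
  have h1 : ∀ i, pr P (C i) * cpr P X (C i) = pr P (X ∩ C i) := by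
    intro i
    unfold cpr
    have := (hCpos i).ne'
    field_simp
  simp only [h1]
  have h2 : X = ⋃ i, X ∩ C i := by rw [← Set.inter_iUnion, hCcover, Set.inter_univ]
  unfold pr
  rw [← ENNReal.toReal_sum (fun i _ => measure_ne_top P _)]
  congr 1
  conv_lhs => rw [h2]
  rw [measure_iUnion (fun i j hij => ((hCdisj hij).mono Set.inter_subset_right
    Set.inter_subset_right)) (fun i => hX.inter (hCmeas i)), tsum_fintype]

/-- If a finite measurable partition with positive-probability cells screens off
`A` from `B`, then the correlation is given by the double-sum formula. -/
theorem stmt_2 {Ω : Type*} [MeasurableSpace Ω] (P : Measure Ω) [IsProbabilityMeasure P]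
    (A B : Set Ω) (hA : MeasurableSet A) (hB : MeasurableSet B)
    (n : ℕ) (hn : 2 ≤ n) (C : Fin n → Set Ω) (hCmeas : ∀ i, MeasurableSet (C i))
    (hCdisj : Pairwise fun i j => Disjoint (C i) (C j))
    (hCcover : (⋃ i, C i) = Set.univ)
    (hCpos : ∀ i, 0 < pr P (C i))
    (hscreen : ∀ i, cpr P (A ∩ B) (C i) = cpr P A (C i) * cpr P B (C i)) :
    pr P (A ∩ B) - pr P A * pr P B =
      (1 / 2) * ∑ i, ∑ j, pr P (C i) * pr P (C j) *
          (cpr P A (C i) - cpr P A (C j)) * (cpr P B (C i) - cpr P B (C j)) := by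
  have tot := pr_total_aux P n C hCmeas hCdisj hCcover hCpos
  have h1 : ∑ i, pr P (C i) = 1 := by
    have h := tot Set.univ MeasurableSet.univ
    have h3 : ∀ i, cpr P Set.univ (C i) = 1 := by
      intro i
      unfold cpr
      rw [Set.univ_inter, div_self (hCpos i).ne']
    simp only [h3, mul_one] at h
    rw [← h]
    simp [pr]
  rw [tot _ (hA.inter hB), tot A hA, tot B hB]
  simp only [hscreen]
  have key : ∀ p a b : Fin n → ℝ, ∑ i, p i = 1 →
      ∑ i, p i * (a i * b i) - (∑ i, p i * a i) * (∑ i, p i * b i) =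
      (1 / 2) * ∑ i, ∑ j, p i * p j * (a i - a j) * (b i - b j) := by
    intro p a b hp
    have e : ∀ i j, p i * p j * (a i - a j) * (b i - b j) =
        (p i * (a i * b i)) * p j + p i * (p j * (a j * b j))
          - (p i * a i) * (p j * b j) - (p i * b i) * (p j * a j) := by
      intro i j
      ring
    simp only [e, Finset.sum_add_distrib, Finset.sum_sub_distrib, ← Finset.mul_sum,
      ← Finset.sum_mul, hp]
    ring
  exact key (fun i => pr P (C i)) (fun i => cpr P A (C i)) (fun i => cpr P B (C i)) h1
end

section
/- Let P be a probability measure on a measurable space Ω, let A, B be measurable events, and let {C_1, …, C_n} be a Reichenbachian common cause system of size n ≥ 2 for (A, B). Then P(A ∩ B) − P(A)·P(B) > 0. -/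
open MeasureTheory Finset

/-- A Reichenbachian common cause system (RCCS) of size `n ≥ 2` for the pair `(A, B)`:
a finite measurable partition of `Ω` with nonzero-probability cells, each of which
screens off `A` from `B`, and whose cells are pairwise probabilistically relevant to
`A` and `B` in the same direction. -/
def IsRCCS {Ω : Type*} [MeasurableSpace Ω] (P : Measure Ω) (A B : Set Ω)
    (n : ℕ) (C : Fin n → Set Ω) : Prop :=
  2 ≤ n ∧
  (∀ i, MeasurableSet (C i)) ∧
  (Pairwise fun i j => Disjoint (C i) (C j)) ∧
  (⋃ i, C i) = Set.univ ∧
  (∀ i, pr P (C i) ≠ 0) ∧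
  (∀ i, cpr P (A ∩ B) (C i) = cpr P A (C i) * cpr P B (C i)) ∧
  (∀ i j, i ≠ j → 0 < (cpr P A (C i) - cpr P A (C j)) * (cpr P B (C i) - cpr P B (C j)))

/-- A Reichenbachian common cause system for `(A, B)` entails that `A` and `B` are
positively correlated. -/
theorem stmt_4 {Ω : Type*} [MeasurableSpace Ω] (P : Measure Ω) [IsProbabilityMeasure P]
    (A B : Set Ω) (hA : MeasurableSet A) (hB : MeasurableSet B)
    (n : ℕ) (C : Fin n → Set Ω) (hC : IsRCCS P A B n C) :
    0 < pr P (A ∩ B) - pr P A * pr P B := by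
  obtain ⟨hn, hCm, hdis, hun, hne, hscr, hrel⟩ := hC
  have total : ∀ X : Set Ω, MeasurableSet X → pr P X = ∑ i, pr P (X ∩ C i) := by
    intro X hX
    have h1 : X = ⋃ i, X ∩ C i := by rw [← Set.inter_iUnion, hun, Set.inter_univ]
    have h2 : P X = ∑ i, P (X ∩ C i) := by
      conv_lhs => rw [h1]
      rw [measure_iUnion, tsum_fintype]
      · intro i j hij
        exact (hdis hij).mono Set.inter_subset_right Set.inter_subset_right
      · intro i
        exact hX.inter (hCm i)
    unfold pr
    rw [h2, ENNReal.toReal_sum]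
    intro i _
    exact measure_ne_top P _
  have hpos : ∀ i, 0 < pr P (C i) := fun i =>
    lt_of_le_of_ne ENNReal.toReal_nonneg (hne i).symm
  have hmul : ∀ (X : Set Ω) i, pr P (X ∩ C i) = pr P (C i) * cpr P X (C i) := by
    intro X i
    unfold cpr
    rw [mul_div_cancel₀ _ (hne i)]
  have hone : ∑ i, pr P (C i) = 1 := by
    have h := total Set.univ MeasurableSet.univ
    simp only [Set.univ_inter] at h
    rw [← h]
    simp [pr]
  rw [total _ (hA.inter hB), total A hA, total B hB]
  simp only [hmul, hscr]
  generalize hp : (fun i => pr P (C i)) = p at *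
  have hp' : ∀ i, pr P (C i) = p i := fun i => congrFun hp i
  simp only [hp'] at *
  set a := fun i => cpr P A (C i) with ha
  set b := fun i => cpr P B (C i) with hb
  change 0 < ∑ i, p i * (a i * b i) - (∑ i, p i * a i) * ∑ i, p i * b i
  have key : ∑ i, ∑ j, p i * p j * ((a i - a j) * (b i - b j)) =
      2 * (∑ i, p i * (a i * b i) - (∑ i, p i * a i) * ∑ i, p i * b i) := by
    have e : ∀ i j, p i * p j * ((a i - a j) * (b i - b j)) =
        (p i * (a i * b i)) * p j + p i * (p j * (a j * b j))
          - (p i * a i) * (p j * b j) - (p i * b i) * (p j * a j) := by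
      intro i j
      ring
    simp only [e, Finset.sum_sub_distrib, Finset.sum_add_distrib, ← Finset.mul_sum,
      ← Finset.sum_mul, hone]
    ring
  have nonneg : ∀ i j, 0 ≤ p i * p j * ((a i - a j) * (b i - b j)) := by
    intro i j
    by_cases h : i = j
    · subst h
      simp
    · exact (mul_pos (mul_pos (hpos i) (hpos j)) (hrel i j h)).le
  have hS : 0 < ∑ i, ∑ j, p i * p j * ((a i - a j) * (b i - b j)) := by
    let i0 : Fin n := ⟨0, by omega⟩
    let j0 : Fin n := ⟨1, by omega⟩
    have hij : i0 ≠ j0 := by simp [i0, j0]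
    refine Finset.sum_pos' (fun i _ => Finset.sum_nonneg fun j _ => nonneg i j)
      ⟨i0, Finset.mem_univ _, ?_⟩
    exact Finset.sum_pos' (fun j _ => nonneg i0 j)
      ⟨j0, Finset.mem_univ _, mul_pos (mul_pos (hpos i0) (hpos j0)) (hrel i0 j0 hij)⟩
  linarith
end

section
/- Let P be a probability measure on a measurable space Ω and let A, B be measurable events with P(A ∩ B) > P(A)·P(B). Then for every integer n ≥ 2 there exists a set of real numbers {a_i, b_i, c_i, d_i : i = 1, …, n} that is admissible* for (A, B). -/
open MeasureTheory Finset

/-- A set of real numbers `{a_i, b_i, c_i, d_i : i = 1, …, n}` is admissible* for a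
pair of events with probabilities `pA = P(A)` and `pB = P(B)`. -/
def AdmissibleStar (pA pB : ℝ) {n : ℕ} (a b c d : Fin n → ℝ) : Prop :=
  (∑ i, a i * c i) = pA ∧
  (∑ i, b i * c i) = pB ∧
  (∑ i, c i) = 1 ∧
  (∀ i, d i = a i * b i) ∧
  (∀ i j, i ≠ j → 0 < (a i - a j) * (b i - b j)) ∧
  (∀ i, 0 < a i ∧ a i < 1) ∧
  (∀ i, 0 < b i ∧ b i < 1) ∧
  (∀ i, 0 < d i ∧ d i < 1) ∧
  (∀ i, 0 < c i ∧ c i < 1)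

/-- Lemma 3 of the text: for every positively correlated pair `(A, B)` and every
`n ≥ 2`, an admissible* set of numbers for `(A, B)` exists. -/
theorem stmt_9 {Ω : Type*} [MeasurableSpace Ω] (P : Measure Ω) [IsProbabilityMeasure P]
    (A B : Set Ω) (hA : MeasurableSet A) (hB : MeasurableSet B)
    (hcorr : pr P A * pr P B < pr P (A ∩ B)) :
    ∀ n : ℕ, 2 ≤ n → ∃ a b c d : Fin n → ℝ,
      AdmissibleStar (pr P A) (pr P B) a b c d := by
  have hp0 : 0 ≤ pr P A := ENNReal.toReal_nonneg
  have hq0 : 0 ≤ pr P B := ENNReal.toReal_nonneg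
  have hp1 : pr P A ≤ 1 := measureReal_le_one (μ := P) (s := A)
  have hq1 : pr P B ≤ 1 := measureReal_le_one (μ := P) (s := B)
  have hAB1 : pr P (A ∩ B) ≤ pr P A :=
    ENNReal.toReal_mono (measure_ne_top P A) (measure_mono Set.inter_subset_left)
  have hAB2 : pr P (A ∩ B) ≤ pr P B :=
    ENNReal.toReal_mono (measure_ne_top P B) (measure_mono Set.inter_subset_right)
  generalize pr P A = p at *
  generalize pr P B = q at *
  generalize pr P (A ∩ B) = r at *
  have hp : 0 < p := by nlinarith
  have hq : 0 < q := by nlinarith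
  have hp' : p < 1 := by
    by_contra h
    have : p = 1 := by linarith
    subst this
    linarith
  have hq' : q < 1 := by
    by_contra h
    have : q = 1 := by linarith
    subst this
    linarith
  intro n hn
  have hnR : (2 : ℝ) ≤ n := by exact_mod_cast hn
  have hn0 : (0 : ℝ) < n := by linarith
  obtain ⟨m, hm, hm1, hm2, hm3, hm4⟩ :
      ∃ m : ℝ, 0 < m ∧ m ≤ p ∧ m ≤ 1 - p ∧ m ≤ q ∧ m ≤ 1 - q := by
    refine ⟨min (min p (1 - p)) (min q (1 - q)), ?_, ?_, ?_, ?_, ?_⟩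
    · simp only [lt_min_iff]
      refine ⟨⟨?_, ?_⟩, ?_, ?_⟩ <;> linarith
    all_goals simp
  obtain ⟨t, ht0, ht1, htinj⟩ : ∃ t : Fin n → ℝ, (∑ i, t i = 0) ∧
      (∀ i, -1 < t i ∧ t i < 1) ∧ ∀ i j, i ≠ j → t i ≠ t j := by
    refine ⟨fun i => ((i : ℝ) - ((n : ℝ) - 1) / 2) / n, ?_, ?_, ?_⟩
    · rw [← Finset.sum_div, Finset.sum_sub_distrib, Fin.sum_univ_eq_sum_range (fun i => (i : ℝ)) n]
      have h : ∀ k : ℕ, ∑ i ∈ Finset.range k, (i : ℝ) = k * (k - 1) / 2 := by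
        intro k
        induction k with
        | zero => simp
        | succ k ih => rw [Finset.sum_range_succ, ih]; push_cast; ring
      rw [h]
      simp
      left
      ring
    · intro i
      have h1 : (0 : ℝ) ≤ (i : ℕ) := Nat.cast_nonneg _
      have h2 : ((i : ℕ) : ℝ) < n := by exact_mod_cast i.2
      constructor
      · rw [lt_div_iff₀ hn0]; linarith
      · rw [div_lt_iff₀ hn0]; linarith
    · intro i j hij h
      simp only [div_left_inj' hn0.ne', sub_left_inj] at h
      exact hij (Fin.ext (by exact_mod_cast h))
  have hs : ∀ x : ℝ, ∑ i, (x + m * t i) * (1 / n) = x := by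
    intro x
    rw [← Finset.sum_mul, Finset.sum_add_distrib, ← Finset.mul_sum, ht0]
    simp
    field_simp
  have hb : ∀ x : ℝ, m ≤ x → m ≤ 1 - x → ∀ i, 0 < x + m * t i ∧ x + m * t i < 1 := by
    intro x h1 h2 i
    obtain ⟨h3, h4⟩ := ht1 i
    constructor <;> nlinarith
  refine ⟨fun i => p + m * t i, fun i => q + m * t i, fun _ => 1 / n,
    fun i => (p + m * t i) * (q + m * t i), hs p, hs q, ?_, fun _ => rfl, ?_,
    hb p hm1 hm2, hb q hm3 hm4, ?_, ?_⟩
  · simp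
    field_simp
  · intro i j hij
    have h : t i - t j ≠ 0 := sub_ne_zero.mpr (htinj i j hij)
    have : (p + m * t i - (p + m * t j)) * (q + m * t i - (q + m * t j))
        = (m * (t i - t j)) ^ 2 := by ring
    simp only [this]
    positivity
  · intro i
    obtain ⟨h1, h2⟩ := hb p hm1 hm2 i
    obtain ⟨h3, h4⟩ := hb q hm3 hm4 i
    exact ⟨mul_pos h1 h3, by nlinarith⟩
  · intro i
    refine ⟨by positivity, ?_⟩
    rw [div_lt_one hn0]
    linarith
end
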